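/- There exists a subshift Σ with follower entropy h_fol(Σ) = 0 and h_top(Σ) > 0 which has uncountably many maximum measures. -/

import Mathlib

open Filter Set MeasureTheory

namespace QFTPaper

variable {A : Type*} {B : Type*}

/-- The left shift on bi-infinite sequences over the alphabet `A`. -/
def shift (x : ℤ → A) : ℤ → A := fun n => x (n + 1)

/-- A subshift: a closed, shift-invariant subset of `A^ℤ`. -/
def IsSubshift [TopologicalSpace A] (X : Set (ℤ → A)) : Prop :=
  IsClosed X ∧ shift '' X = X

/-- The finite word `w` occurs in `x` at position `k`. -/
def OccursAt (w : List A) (x : ℤ → A) (k : ℤ) : Prop :=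
  ∀ i : Fin w.length, x (k + (i : ℕ)) = w.get i

/-- The language of `X`: words of length `n` occurring in elements of `X`
(at position `0`, which is no restriction by shift-invariance). -/
def Lang (X : Set (ℤ → A)) (n : ℕ) : Set (List A) :=
  { w | w.length = n ∧ ∃ x ∈ X, OccursAt w x 0 }

/-- Topological entropy of a subshift. -/
noncomputable def hTop (X : Set (ℤ → A)) : ℝ :=
  limsup (fun n : ℕ => Real.log (Nat.card ↥(Lang X n)) / (n : ℝ)) atTop

/-- Follower set of the finite word `w = A₋ₙ…A₀` (listed from `A₋ₙ` to `A₀`):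
the set of one-sided sequences `B₀B₁B₂…` with `B ∈ X` and `B₋ₙ…B₀ = A₋ₙ…A₀`,
realized by requiring `w` to occur in `B` at positions `0,…,n` and reading off
the tail of `B` starting at the position of the last letter of `w`.
For the empty word this gives `X₊` (by shift-invariance). -/
def fol (X : Set (ℤ → A)) (w : List A) : Set (ℕ → A) :=
  { y | ∃ B ∈ X, (∀ i : Fin w.length, B ((i : ℕ) : ℤ) = w.get i) ∧
        ∀ k : ℕ, y k = B ((w.length : ℤ) - 1 + (k : ℤ)) }

/-- `w = A₋ₙ…A₀` is a left constraint:
`∅ ≠ fol(A₋ₙ…A₀) ⊊ fol(A₋ₙ₊₁…A₀)`. -/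
def IsLeftConstraint (X : Set (ℤ → A)) (w : List A) : Prop :=
  w ≠ [] ∧ fol X w ≠ ∅ ∧ fol X w ⊂ fol X w.tail

/-- `𝒞(X, n)`: the set of left constraints of length `n`. -/
def LC (X : Set (ℤ → A)) (n : ℕ) : Set (List A) :=
  { w | w.length = n ∧ IsLeftConstraint X w }

/-- The left constraint entropy `h_𝒞(X) = limsup (1/n) log⁺ #𝒞(X,n)`. -/
noncomputable def hC (X : Set (ℤ → A)) : ℝ :=
  limsup (fun n : ℕ => max 0 (Real.log (Nat.card ↥(LC X n))) / (n : ℝ)) atTop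

/-- The time-reversed subshift `X̄`. -/
def rev (X : Set (ℤ → A)) : Set (ℤ → A) :=
  (fun x : ℤ → A => fun n : ℤ => x (-n)) '' X

/-- The symmetric constraint entropy `h_𝒮𝒞(X) = min (h_𝒞(X), h_𝒞(X̄))`. -/
noncomputable def hSC (X : Set (ℤ → A)) : ℝ := min (hC X) (hC (rev X))

/-- Subshift of quasi-finite type: `h_𝒮𝒞(X) < h_top(X)`. -/
def IsQFT [TopologicalSpace A] (X : Set (ℤ → A)) : Prop :=
  IsSubshift X ∧ hSC X < hTop X

/-- The word `B₋ₘ…B₀` read off from a one-sided past `b` (where `b j = B₋ⱼ`). -/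
def wordOf (b : ℕ → A) (m : ℕ) : List A :=
  (List.range (m + 1)).map fun j => b (m - j)

/-- An extendable left constraint: a left constraint `A₋ₙ…A₀` which admits a
one-sided past `B` extending it such that `B₋ₘ…B₀` is again a left constraint
for infinitely many `m`. -/
def IsExtendable (X : Set (ℤ → A)) (w : List A) : Prop :=
  IsLeftConstraint X w ∧
  ∃ b : ℕ → A, wordOf b (w.length - 1) = w ∧
    ∀ N : ℕ, ∃ m, N ≤ m ∧ IsLeftConstraint X (wordOf b m)

/-- `𝒞*(X, n)`: the set of extendable left constraints of length `n`. -/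
def ELC (X : Set (ℤ → A)) (n : ℕ) : Set (List A) :=
  { w | w.length = n ∧ IsExtendable X w }

/-- The extendable left constraint entropy `h*_𝒞(X)`. -/
noncomputable def hCstar (X : Set (ℤ → A)) : ℝ :=
  limsup (fun n : ℕ => Real.log (Nat.card ↥(ELC X n)) / (n : ℝ)) atTop

/-- `h*_𝒮𝒞(X) = min (h*_𝒞(X), h*_𝒞(X̄))`. -/
noncomputable def hSCstar (X : Set (ℤ → A)) : ℝ := min (hCstar X) (hCstar (rev X))

/-- Subshift of weak quasi-finite type: `h*_𝒮𝒞(X) < h_top(X)`. -/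
def IsWeakQFT [TopologicalSpace A] (X : Set (ℤ → A)) : Prop :=
  IsSubshift X ∧ hSCstar X < hTop X

/-- Subshift of finite type: defined by excluding a finite set of finite words. -/
def IsSFT (X : Set (ℤ → A)) : Prop :=
  ∃ F : Finset (List A), X = { x | ∀ w ∈ F, ∀ k : ℤ, ¬ OccursAt w x k }

/-- Sofic subshift: the image of an SFT under a continuous shift-commuting map. -/
def IsSofic [TopologicalSpace A] (X : Set (ℤ → A)) : Prop :=
  ∃ (B : Type) (_ : Fintype B) (Y : Set (ℤ → B)) (π : (ℤ → B) → (ℤ → A)),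
    IsSFT Y ∧
    (letI : TopologicalSpace B := ⊥
     Continuous π) ∧
    (∀ x : ℤ → B, π (shift x) = shift (π x)) ∧ π '' Y = X


/-- Topological conjugacy of subshifts: a homeomorphism commuting with the shifts. -/
def Conjugate [TopologicalSpace A] [TopologicalSpace B]
    (X : Set (ℤ → A)) (Y : Set (ℤ → B)) : Prop :=
  ∃ φ : X ≃ₜ Y, ∀ x x' : X, (x' : ℤ → A) = shift (x : ℤ → A) →
    (φ x' : ℤ → B) = shift (φ x : ℤ → B)

/-- The cylinder of a word of length `n` placed at positions `0,…,n-1`. -/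
def cylSet (n : ℕ) (w : Fin n → A) : Set (ℤ → A) :=
  { x | ∀ i : Fin n, x ((i : ℕ) : ℤ) = w i }

/-- Entropy of the partition of `A^ℤ` into cylinders of length `n`. -/
noncomputable def blockEntropy [Fintype A] [MeasurableSpace A]
    (μ : Measure (ℤ → A)) (n : ℕ) : ℝ :=
  ∑ w : Fin n → A, Real.negMulLog ((μ (cylSet n w)).toReal)

/-- Kolmogorov–Sinai entropy of a shift-invariant measure on `A^ℤ`,
computed with the natural (generating) partition into cylinders. -/
noncomputable def KSEntropy [Fintype A] [MeasurableSpace A]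
    (μ : Measure (ℤ → A)) : ℝ :=
  ⨅ n : ℕ, blockEntropy μ (n + 1) / (n + 1)

/-- A maximum measure: an ergodic shift-invariant Borel probability measure
carried by `X` whose Kolmogorov–Sinai entropy equals the topological entropy of `X`. -/
def IsMaxMeasure [Fintype A] [MeasurableSpace A]
    (X : Set (ℤ → A)) (μ : Measure (ℤ → A)) : Prop :=
  IsProbabilityMeasure μ ∧ μ Xᶜ = 0 ∧ Ergodic shift μ ∧ KSEntropy μ = hTop X

/-- The number of points of `X` fixed by the `n`-th power of the shift. -/
noncomputable def perCount (X : Set (ℤ → A)) (n : ℕ) : ℕ :=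
  Nat.card {x : ℤ → A | x ∈ X ∧ shift^[n] x = x}

/-- The follower entropy: growth rate of the number of distinct follower sets
of words of length `n`. -/
noncomputable def hFol (X : Set (ℤ → A)) : ℝ :=
  limsup (fun n : ℕ =>
    Real.log (Nat.card ↥(fol X '' Lang X n)) / (n : ℝ)) atTop

/-!
Take the product `X` of a zero entropy subshift `Y` with a full shift `F^ℤ`. The full shift
constrains nothing, so a follower set of `X` is determined by a follower set of `Y` and one letter:
`hFol X ≤ hFol Y ≤ hTop Y = 0`, while `hTop X = log #F`. The product of any ergodic measure `ν` on
`Y` with the uniform Bernoulli measure is ergodic, because Bernoulli measures are mixing, and its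
cylinders of length `n` have measure at most `(#F)⁻ⁿ`, so it is a maximum measure of `X`; it
remembers `ν` as its marginal.

Hence it suffices that `Y` has zero entropy and uncountably many ergodic measures. The closure of
the set of all mechanical words `i ↦ ⌊(i + 1) α + β⌋ - ⌊i α + β⌋` with `0 ≤ α ≤ 1` will do: at most
`(n + 1) ^ 4` words of length `n` occur, and for irrational `α` a uniformly random `β` gives an
ergodic measure, by the ergodicity of irrational rotations, in which the symbol `1` has
frequency `α`.
-/

section Mixing

open scoped Topology

variable {Ω Ω' : Type*} [mΩ : MeasurableSpace Ω] [MeasurableSpace Ω']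

theorem hasSum_measureReal_iUnion (μ : Measure Ω) [IsFiniteMeasure μ] {s : ℕ → Set Ω}
    (hs : ∀ i, MeasurableSet (s i)) (hdisj : Pairwise (Function.onFun Disjoint s)) :
    HasSum (fun i => μ.real (s i)) (μ.real (⋃ i, s i)) := by
  have hfin : ∑' i, μ (s i) ≠ ⊤ := measure_iUnion hdisj hs ▸ measure_ne_top μ _
  rw [measureReal_def, measure_iUnion hdisj hs, ENNReal.tsum_toReal_eq fun i => measure_ne_top μ _]
  exact ENNReal.hasSum_toReal hfin

theorem tendsto_measureReal_sub_of_generateFrom {ι : Type*} {l : Filter ι} {ν : Measure Ω}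
    [IsFiniteMeasure ν] {μ μ' : ι → Measure Ω} (hμ : ∀ k, μ k ≤ ν) (hμ' : ∀ k, μ' k ≤ ν)
    {C : Set (Set Ω)} (hgen : mΩ = MeasurableSpace.generateFrom C) (hpi : IsPiSystem C)
    (huniv : univ ∈ C) (hC : ∀ s ∈ C, Tendsto (fun k => (μ k).real s - (μ' k).real s) l (𝓝 0))
    {s : Set Ω} (hs : MeasurableSet s) :
    Tendsto (fun k => (μ k).real s - (μ' k).real s) l (𝓝 0) := by
  have (k : ι) : IsFiniteMeasure (μ k) := isFiniteMeasure_of_le ν (hμ k)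
  have (k : ι) : IsFiniteMeasure (μ' k) := isFiniteMeasure_of_le ν (hμ' k)
  have real_le {m : Measure Ω} (h : m ≤ ν) (s : Set Ω) : m.real s ≤ ν.real s :=
    ENNReal.toReal_mono (measure_ne_top ν s) (h s)
  induction s, hs using MeasurableSpace.induction_on_inter hgen hpi with
  | empty => simpa only [measureReal_empty, sub_zero] using tendsto_const_nhds
  | basic s hs => exact hC s hs
  | compl s hs ih =>
    have hdiff (k : ι) : (μ k).real sᶜ - (μ' k).real sᶜ =
        ((μ k).real univ - (μ' k).real univ) - ((μ k).real s - (μ' k).real s) := by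
      rw [measureReal_compl hs, measureReal_compl hs]; ring
    simpa only [hdiff, sub_zero] using (hC univ huniv).sub ih
  | iUnion s hdisj hs ih =>
    have hdiff (k : ι) : (μ k).real (⋃ i, s i) - (μ' k).real (⋃ i, s i) =
        ∑' i, ((μ k).real (s i) - (μ' k).real (s i)) :=
      ((hasSum_measureReal_iUnion (μ k) hs hdisj).sub
        (hasSum_measureReal_iUnion (μ' k) hs hdisj)).tsum_eq.symm
    have hbound (k : ι) (i : ℕ) : ‖(μ k).real (s i) - (μ' k).real (s i)‖ ≤ ν.real (s i) :=
      abs_sub_le_of_nonneg_of_le measureReal_nonneg (real_le (hμ k) _)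
        measureReal_nonneg (real_le (hμ' k) _)
    simpa only [hdiff, tsum_zero] using tendsto_tsum_of_dominated_convergence
      (hasSum_measureReal_iUnion ν hs hdisj).summable ih (Eventually.of_forall hbound)

/-- Strong mixing: `μ (s ∩ T⁻ᵏ t) → μ s * μ t` for all measurable `s` and `t`. -/
structure IsMixing (T : Ω → Ω) (μ : Measure Ω) : Prop extends MeasurePreserving T μ μ where
  tendsto_measureReal_inter : ∀ {s t : Set Ω}, MeasurableSet s → MeasurableSet t →
    Tendsto (fun k : ℕ => μ.real (s ∩ T^[k] ⁻¹' t)) atTop (𝓝 (μ.real s * μ.real t))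

theorem map_restrict_le {T : Ω → Ω} {μ : Measure Ω} (hT : MeasurePreserving T μ μ) (s : Set Ω) :
    (μ.restrict s).map T ≤ μ :=
  (Measure.map_mono Measure.restrict_le_self hT.measurable).trans_eq hT.map_eq

theorem measureReal_map_restrict {T : Ω → Ω} (hT : Measurable T) (μ : Measure Ω) (s : Set Ω)
    {t : Set Ω} (ht : MeasurableSet t) :
    ((μ.restrict s).map T).real t = μ.real (s ∩ T ⁻¹' t) := by
  rw [map_measureReal_apply hT ht, measureReal_restrict_apply (hT ht), inter_comm]

theorem measure_smul_self_le (μ : Measure Ω) [IsProbabilityMeasure μ] (s : Set Ω) :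
    μ s • μ ≤ μ := fun t => by
  simpa using mul_le_of_le_one_left (zero_le (a := μ t)) prob_le_one

theorem isMixing_of_generateFrom {T : Ω → Ω} {μ : Measure Ω} [IsProbabilityMeasure μ]
    (hT : MeasurePreserving T μ μ) {C : Set (Set Ω)}
    (hgen : mΩ = MeasurableSpace.generateFrom C) (hpi : IsPiSystem C) (huniv : univ ∈ C)
    (hC : ∀ s ∈ C, ∀ t ∈ C,
      Tendsto (fun k : ℕ => μ.real (s ∩ T^[k] ⁻¹' t)) atTop (𝓝 (μ.real s * μ.real t))) :
    IsMixing T μ := by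
  have measurable_of_mem {s : Set Ω} (hs : s ∈ C) : MeasurableSet s :=
    hgen ▸ MeasurableSpace.measurableSet_generateFrom hs
  have mixing_right {s t : Set Ω} (hs : s ∈ C) (ht : MeasurableSet t) :
      Tendsto (fun k : ℕ => μ.real (s ∩ T^[k] ⁻¹' t)) atTop (𝓝 (μ.real s * μ.real t)) := by
    have hsplit (k : ℕ) {t : Set Ω} (ht : MeasurableSet t) :
        ((μ.restrict s).map T^[k]).real t - (μ s • μ).real t =
          μ.real (s ∩ T^[k] ⁻¹' t) - μ.real s * μ.real t := by
      rw [measureReal_map_restrict (hT.iterate k).measurable _ _ ht,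
        measureReal_ennreal_smul_apply, measureReal_def μ s]
    rw [← tendsto_sub_nhds_zero_iff]
    refine (tendsto_measureReal_sub_of_generateFrom (fun k => map_restrict_le (hT.iterate k) s)
      (fun _ => measure_smul_self_le μ s) hgen hpi huniv (fun t ht => ?_) ht).congr
      fun k => hsplit k ht
    simpa only [hsplit _ (measurable_of_mem ht)] using tendsto_sub_nhds_zero_iff.2 (hC s hs t ht)
  refine ⟨hT, fun {s t} hs ht => ?_⟩
  have hsplit (k : ℕ) {s : Set Ω} (hs : MeasurableSet s) :
      (μ.restrict (T^[k] ⁻¹' t)).real s - (μ t • μ).real s =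
        μ.real (s ∩ T^[k] ⁻¹' t) - μ.real s * μ.real t := by
    rw [measureReal_restrict_apply hs, measureReal_ennreal_smul_apply, measureReal_def μ t,
      mul_comm]
  rw [← tendsto_sub_nhds_zero_iff]
  refine (tendsto_measureReal_sub_of_generateFrom (fun _ => Measure.restrict_le_self)
    (fun _ => measure_smul_self_le μ t) hgen hpi huniv (fun s hs => ?_) hs).congr
    fun k => hsplit k hs
  simpa only [hsplit _ (measurable_of_mem hs)] using
    tendsto_sub_nhds_zero_iff.2 (mixing_right hs ht)

variable {R : Ω → Ω} {T : Ω' → Ω'} {P : Measure Ω} {Q : Measure Ω'}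
  [IsProbabilityMeasure P] [IsProbabilityMeasure Q]

theorem tendsto_measureReal_prod_inter (hR : MeasurePreserving R P P) (hT : IsMixing T Q)
    {s : Set Ω} {t : Set Ω'} (ht : MeasurableSet t)
    {E : Set (Ω × Ω')} (hE : MeasurableSet E) :
    Tendsto (fun k : ℕ => (P.prod Q).real (s ×ˢ t ∩ (Prod.map R T)^[k] ⁻¹' E) -
      Q.real t * (P.prod Q).real (s ×ˢ univ ∩ (Prod.map R T)^[k] ⁻¹' E)) atTop (𝓝 0) := by
  have hRT (k : ℕ) := (hR.prod hT.toMeasurePreserving).iterate k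
  have hsplit (k : ℕ) {E : Set (Ω × Ω')} (hE : MeasurableSet E) :
      (((P.prod Q).restrict (s ×ˢ t)).map (Prod.map R T)^[k]).real E -
        (Q t • ((P.prod Q).restrict (s ×ˢ univ)).map (Prod.map R T)^[k]).real E =
      (P.prod Q).real (s ×ˢ t ∩ (Prod.map R T)^[k] ⁻¹' E) -
        Q.real t * (P.prod Q).real (s ×ˢ univ ∩ (Prod.map R T)^[k] ⁻¹' E) := by
    rw [measureReal_ennreal_smul_apply, measureReal_map_restrict (hRT k).measurable _ _ hE,
      measureReal_map_restrict (hRT k).measurable _ _ hE, measureReal_def Q t]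
  refine (tendsto_measureReal_sub_of_generateFrom (fun k => map_restrict_le (hRT k) _)
    (fun k => ?_) generateFrom_prod.symm isPiSystem_prod ?_ ?_ hE).congr fun k => hsplit k hE
  · refine le_trans (fun E => ?_) (map_restrict_le (hRT k) (s ×ˢ univ))
    simpa using mul_le_of_le_one_left (zero_le (a := _)) prob_le_one
  · exact ⟨univ, .univ, univ, .univ, univ_prod_univ⟩
  · rintro _ ⟨a, ha, b, hb, rfl⟩
    have hrect (k : ℕ) : (P.prod Q).real (s ×ˢ t ∩ (Prod.map R T)^[k] ⁻¹' a ×ˢ b) -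
        Q.real t * (P.prod Q).real (s ×ˢ univ ∩ (Prod.map R T)^[k] ⁻¹' a ×ˢ b) =
        P.real (s ∩ R^[k] ⁻¹' a) * (Q.real (t ∩ T^[k] ⁻¹' b) - Q.real t * Q.real b) := by
      have hb_inv : Q.real (T^[k] ⁻¹' b) = Q.real b :=
        (hT.toMeasurePreserving.iterate k).measureReal_preimage hb.nullMeasurableSet
      rw [Prod.map_iterate, preimage_prod_map_prod, prod_inter_prod, prod_inter_prod,
        measureReal_prod_prod, measureReal_prod_prod, univ_inter, hb_inv]
      ring
    simp only [hsplit _ (ha.prod hb), hrect]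
    exact bdd_le_mul_tendsto_zero' 1
      (Eventually.of_forall fun k => (abs_of_nonneg measureReal_nonneg).trans_le measureReal_le_one)
      (tendsto_sub_nhds_zero_iff.2 (hT.tendsto_measureReal_inter ht hb))

theorem restrict_eq_prod_of_isMixing (hR : MeasurePreserving R P P) (hT : IsMixing T Q)
    {E : Set (Ω × Ω')} (hE : MeasurableSet E) (hinv : Prod.map R T ⁻¹' E = E) :
    (P.prod Q).restrict E = (((P.prod Q).restrict E).map Prod.fst).prod Q := by
  refine (Measure.prod_eq fun s t hs ht => ?_).symm
  have indep : (P.prod Q).real (s ×ˢ t ∩ E) = Q.real t * (P.prod Q).real (s ×ˢ univ ∩ E) := by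
    have hE_iter (k : ℕ) : (Prod.map R T)^[k] ⁻¹' E = E :=
      Function.IsFixedPt.preimage_iterate hinv k
    have := tendsto_measureReal_prod_inter hR hT (s := s) ht hE
    simp only [hE_iter] at this
    exact sub_eq_zero.1 (tendsto_nhds_unique tendsto_const_nhds this)
  have hst : s ×ˢ univ = (Prod.fst ⁻¹' s : Set (Ω × Ω')) := prod_univ
  rw [← ENNReal.toReal_eq_toReal_iff' (measure_ne_top _ _) (by finiteness), ENNReal.toReal_mul,
    Measure.restrict_apply (hs.prod ht), Measure.map_apply measurable_fst hs,
    Measure.restrict_apply (measurable_fst hs), ← hst]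
  exact indep.trans (mul_comm _ _)

theorem ergodic_prodMap_of_isMixing (hR : Ergodic R P) (hT : IsMixing T Q) :
    Ergodic (Prod.map R T) (P.prod Q) := by
  have hRT := hR.toMeasurePreserving.prod hT.toMeasurePreserving
  refine ⟨hRT, ⟨fun E hE hinv => ?_⟩⟩
  set m := P.prod Q
  set margin := (m.restrict E).map Prod.fst
  have restrict_eq_prod : m.restrict E = margin.prod Q :=
    restrict_eq_prod_of_isMixing hR.toMeasurePreserving hT hE hinv
  have margin_ac : margin ≪ P :=
    (measurePreserving_fst (μ := P) (ν := Q)).map_eq ▸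
      (Measure.restrict_le_self (μ := m) (s := E)).absolutelyContinuous.map measurable_fst
  have margin_inv : MeasurePreserving R margin margin := by
    have restrict_inv : (m.restrict E).map (Prod.map R T) = m.restrict E := by
      simpa only [hinv] using (hRT.restrict_preimage hE).map_eq
    refine ⟨hR.measurable, ?_⟩
    calc margin.map R = (m.restrict E).map (Prod.fst ∘ Prod.map R T) :=
          Measure.map_map hR.measurable measurable_fst
      _ = margin := by rw [← Measure.map_map measurable_fst hRT.measurable, restrict_inv]
  obtain ⟨c, hc⟩ := hR.eq_smul_of_absolutelyContinuous margin_inv margin_ac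
  have restrict_apply (s : Set (Ω × Ω')) : m.restrict E s = c * m s := by
    rw [restrict_eq_prod, hc, Measure.prod_smul_left, Measure.smul_apply, smul_eq_mul]
  have hcompl : c * m Eᶜ = 0 := by
    rw [← restrict_apply, Measure.restrict_apply hE.compl, compl_inter_self, measure_empty]
  rw [eventuallyConst_set']
  rcases mul_eq_zero.1 hcompl with hc0 | hE0
  · refine Or.inl (ae_eq_empty.2 ?_)
    rw [← Measure.restrict_apply_univ, restrict_apply, hc0, zero_mul]
  · exact Or.inr (ae_eq_univ.2 hE0)

end Mixing

section Bernoulli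

theorem shift_iterate (k : ℕ) (x : ℤ → A) (n : ℤ) : shift^[k] x n = x (n + k) := by
  induction k generalizing x with
  | zero => simp
  | succ k ih => rw [Function.iterate_succ_apply, ih, shift, Nat.cast_succ, add_assoc]

theorem shift_iterate_preimage_cylinder (k : ℕ) (t : Finset ℤ) (V : Set (t → A)) :
    shift^[k] ⁻¹' cylinder t V =
      cylinder (t.map (addRightEmbedding (k : ℤ)))
        ((fun (y : _ → A) (i : t) => y ⟨i + k, Finset.mem_map_of_mem _ i.2⟩) ⁻¹' V) := by
  ext x
  have : t.restrict (shift^[k] x) = fun i : t => x (i + k) := funext fun i => shift_iterate k x i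
  simp only [mem_preimage, mem_cylinder, this]
  rfl

theorem eventually_disjoint_map_addRight (s t : Finset ℤ) :
    ∀ᶠ k : ℕ in atTop, Disjoint s (t.map (addRightEmbedding (k : ℤ))) := by
  have : ∀ᶠ k : ℕ in atTop, ∀ a ∈ s, ∀ b ∈ t, (k : ℤ) ≠ a - b := by
    simp only [eventually_all_finset]
    exact fun a _ b _ => tendsto_natCast_atTop_atTop.eventually_ne_atTop (a - b)
  filter_upwards [this] with k hk
  rw [Finset.disjoint_left]
  rintro a ha hmem
  obtain ⟨b, hb, rfl⟩ := Finset.mem_map.1 hmem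
  exact hk _ ha b hb (by simp)

variable [MeasurableSpace A]

theorem measurable_shift : Measurable (shift : (ℤ → A) → (ℤ → A)) := by
  unfold shift; fun_prop

/-- The Bernoulli measure on `A^ℤ`: the coordinates are independent with law `ρ`. -/
noncomputable def bernoulli (ρ : Measure A) : Measure (ℤ → A) :=
  Measure.infinitePi fun _ => ρ

variable (ρ : Measure A) [IsProbabilityMeasure ρ]

instance : IsProbabilityMeasure (bernoulli ρ) :=
  inferInstanceAs (IsProbabilityMeasure (Measure.infinitePi _))

theorem measurePreserving_shift_bernoulli :
    MeasurePreserving shift (bernoulli ρ) (bernoulli ρ) :=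
  ⟨measurable_shift, Measure.map_infinitePi_infinitePi_of_inj (P := fun _ => ρ)
    (f := fun n : ℤ => n + 1) (add_left_injective 1)⟩

theorem bernoulli_cylinder_inter {s t : Finset ℤ} (hst : Disjoint s t) {U : Set (s → A)}
    {V : Set (t → A)} (hU : MeasurableSet U) (hV : MeasurableSet V) :
    (bernoulli ρ).real (cylinder s U ∩ cylinder t V) =
      (bernoulli ρ).real (cylinder s U) * (bernoulli ρ).real (cylinder t V) := by
  have coord_indep : ProbabilityTheory.iIndepFun (fun (i : ℤ) (x : ℤ → A) => x i) (bernoulli ρ) :=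
    ProbabilityTheory.iIndepFun_infinitePi (X := fun _ a => a) fun _ => measurable_id
  have := (coord_indep.indepFun_finset s t hst measurable_pi_apply).measure_inter_preimage_eq_mul
    U V hU hV
  simp only [measureReal_def, ← ENNReal.toReal_mul]
  exact congrArg ENNReal.toReal this

theorem isMixing_shift_bernoulli : IsMixing shift (bernoulli ρ) := by
  refine isMixing_of_generateFrom (measurePreserving_shift_bernoulli ρ)
    (generateFrom_measurableCylinders (α := fun _ : ℤ => A)).symm isPiSystem_measurableCylinders
    (univ_mem_measurableCylinders _) fun F hF G hG => ?_
  obtain ⟨s, U, hU, rfl⟩ := (mem_measurableCylinders F).1 hF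
  obtain ⟨t, V, hV, rfl⟩ := (mem_measurableCylinders G).1 hG
  refine tendsto_const_nhds.congr' ?_
  filter_upwards [eventually_disjoint_map_addRight s t] with k hk
  have hinv : (bernoulli ρ).real (shift^[k] ⁻¹' cylinder t V) = (bernoulli ρ).real (cylinder t V) :=
    ((measurePreserving_shift_bernoulli ρ).iterate k).measureReal_preimage
      (hV.cylinder _).nullMeasurableSet
  rw [← hinv, shift_iterate_preimage_cylinder,
    bernoulli_cylinder_inter ρ hk hU (measurable_pi_lambda _ (fun i => measurable_pi_apply _) hV)]

end Bernoulli

section ExpGrowth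

open scoped Topology

/-- Exponential growth rate of a sequence of cardinalities; `hTop` and `hFol` are of this form. -/
noncomputable def expGrowth (c : ℕ → ℕ) : ℝ :=
  limsup (fun n : ℕ => Real.log (c n) / n) atTop

theorem log_natCast_div_nonneg (m n : ℕ) : 0 ≤ Real.log m / (n : ℝ) :=
  div_nonneg (Real.log_natCast_nonneg m) n.cast_nonneg

theorem isCoboundedUnder_log_div (c : ℕ → ℕ) :
    IsCoboundedUnder (· ≤ ·) atTop fun n : ℕ => Real.log (c n) / n :=
  (isBoundedUnder_of ⟨0, fun n => log_natCast_div_nonneg (c n) n⟩).isCoboundedUnder_flip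

variable {b d : ℕ} {c c' : ℕ → ℕ}

theorem log_natCast_le_log {m m' : ℕ} (h : m ≤ m') : Real.log m ≤ Real.log m' := by
  rcases m.eq_zero_or_pos with rfl | hm
  · simpa using Real.log_natCast_nonneg m'
  · exact Real.log_le_log (mod_cast hm) (mod_cast h)

theorem isBoundedUnder_log_div (hc : ∀ n, c n ≤ b ^ n) :
    IsBoundedUnder (· ≤ ·) atTop fun n : ℕ => Real.log (c n) / n :=
  isBoundedUnder_of ⟨Real.log b, fun n => div_le_of_le_mul₀ n.cast_nonneg
    (Real.log_natCast_nonneg b) <| (log_natCast_le_log (hc n)).trans_eq <| by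
      rw [Nat.cast_pow, Real.log_pow, mul_comm]⟩

theorem expGrowth_nonneg (hc : ∀ n, c n ≤ b ^ n) : 0 ≤ expGrowth c :=
  le_limsup_of_frequently_le (Frequently.of_forall fun n => log_natCast_div_nonneg (c n) n)
    (isBoundedUnder_log_div hc)

theorem log_natCast_mul_le (m k : ℕ) :
    Real.log ((m * k : ℕ) : ℝ) ≤ Real.log m + Real.log k := by
  rcases eq_or_ne m 0 with rfl | hm
  · simpa using Real.log_natCast_nonneg k
  rcases eq_or_ne k 0 with rfl | hk
  · simpa using Real.log_natCast_nonneg m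
  rw [Nat.cast_mul, Real.log_mul (mod_cast hm) (mod_cast hk)]

theorem expGrowth_le_of_le_mul_const {k : ℕ} (h : ∀ n, c n ≤ c' n * k)
    (hc' : ∀ n, c' n ≤ b ^ n) : expGrowth c ≤ expGrowth c' := by
  set u : ℕ → ℝ := fun n => Real.log (c' n) / n
  set v : ℕ → ℝ := fun n => Real.log k / n
  have hu : IsBoundedUnder (· ≤ ·) atTop u := isBoundedUnder_log_div hc'
  have hv : Tendsto v atTop (𝓝 0) := tendsto_const_div_atTop_nhds_zero_nat (Real.log k)
  have hle (n : ℕ) : Real.log (c n) / n ≤ (u + v) n := by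
    rw [Pi.add_apply, ← add_div]
    exact div_le_div_of_nonneg_right
      ((log_natCast_le_log (h n)).trans (log_natCast_mul_le (c' n) k)) n.cast_nonneg
  calc expGrowth c ≤ limsup (u + v) atTop :=
        limsup_le_limsup (Eventually.of_forall hle) (isCoboundedUnder_log_div _)
          (isBoundedUnder_le_add hu hv.isBoundedUnder_le)
    _ ≤ limsup u atTop + limsup v atTop :=
        limsup_add_le (isBoundedUnder_of ⟨0, fun n => log_natCast_div_nonneg (c' n) n⟩) hu
          hv.isCoboundedUnder_le hv.isBoundedUnder_le
    _ = expGrowth c' := by rw [hv.limsup_eq, add_zero, expGrowth]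

theorem expGrowth_mul_pow (hc : ∀ n, c n ≤ b ^ n) (hc0 : ∀ n, c n ≠ 0) {q : ℕ} (hq : q ≠ 0) :
    expGrowth (fun n => c n * q ^ n) = expGrowth c + Real.log q := by
  rw [expGrowth, expGrowth, ← limsup_add_const _ _ _ (isBoundedUnder_log_div hc)
    (isCoboundedUnder_log_div c)]
  refine limsup_congr ?_
  filter_upwards [eventually_ne_atTop 0] with n hn
  have hn' : (n : ℝ) ≠ 0 := mod_cast hn
  rw [Nat.cast_mul, Nat.cast_pow, Real.log_mul (mod_cast hc0 n) (mod_cast pow_ne_zero n hq),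
    Real.log_pow, add_div, mul_div_cancel_left₀ _ hn']

theorem expGrowth_eq_zero (hc : ∀ n, c n ≤ (n + 1) ^ d) : expGrowth c = 0 := by
  have hlog : Tendsto (fun n : ℕ => d * (Real.log (n + 1) / n)) atTop (𝓝 0) := by
    have hcomp := (Real.tendsto_pow_log_div_mul_add_atTop 1 (-1) 1 one_ne_zero).comp
      (tendsto_atTop_add_const_right _ 1 tendsto_natCast_atTop_atTop)
    simpa [Function.comp_def] using hcomp.const_mul (d : ℝ)
  refine (squeeze_zero (fun n => log_natCast_div_nonneg (c n) n) (fun n => ?_) hlog).limsup_eq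
  calc Real.log (c n) / n ≤ Real.log ((n + 1) ^ d : ℕ) / n :=
        div_le_div_of_nonneg_right (log_natCast_le_log (hc n)) n.cast_nonneg
    _ = d * (Real.log (n + 1) / n) := by push_cast; rw [Real.log_pow, mul_div_assoc]

end ExpGrowth

section Language

/-- The word of length `n` of `x` at position `0`, as a tuple; it codes the elements of `Lang` and
indexes the cylinders `cylSet`. -/
def block (n : ℕ) (x : ℤ → A) : Fin n → A := fun i => x i

theorem Lang_eq_image_block (X : Set (ℤ → A)) (n : ℕ) :
    Lang X n = List.ofFn '' (block n '' X) := by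
  ext w
  constructor
  · rintro ⟨rfl, x, hx, hocc⟩
    refine ⟨block w.length x, ⟨x, hx, rfl⟩, ?_⟩
    conv_rhs => rw [← List.ofFn_get w]
    exact congrArg List.ofFn (funext fun i => by simpa [block] using hocc i)
  · rintro ⟨_, ⟨x, hx, rfl⟩, rfl⟩
    refine ⟨List.length_ofFn, x, hx, fun i => ?_⟩
    simp [block]

theorem card_Lang (X : Set (ℤ → A)) (n : ℕ) :
    Nat.card (Lang X n) = (block n '' X).ncard := by
  rw [Lang_eq_image_block, Nat.card_coe_set_eq, ncard_image_of_injective _ List.ofFn_injective]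

theorem cylSet_eq_preimage_block (n : ℕ) (w : Fin n → A) : cylSet n w = block n ⁻¹' {w} := by
  ext x
  exact funext_iff.symm

theorem image_block_closure [TopologicalSpace A] [DiscreteTopology A] (Z : Set (ℤ → A)) (n : ℕ) :
    block n '' closure Z = block n '' Z := by
  have hcont : Continuous (block n : (ℤ → A) → Fin n → A) :=
    continuous_pi fun i => continuous_apply _
  refine (image_closure_subset_closure_image hcont |>.trans_eq ?_).antisymm
    (image_mono subset_closure)
  exact closure_discrete _

theorem measurable_block [MeasurableSpace A] (n : ℕ) : Measurable (block n : (ℤ → A) → Fin n → A) :=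
  measurable_pi_lambda _ fun _ => measurable_pi_apply _

theorem measurableSet_cylSet [MeasurableSpace A] [MeasurableSingletonClass A] (n : ℕ)
    (w : Fin n → A) : MeasurableSet (cylSet n w) := by
  rw [cylSet_eq_preimage_block]
  exact measurable_block n (measurableSet_singleton w)

variable [Finite A]

theorem card_Lang_le (X : Set (ℤ → A)) (n : ℕ) : Nat.card (Lang X n) ≤ Nat.card A ^ n := by
  rw [card_Lang]
  simpa [Set.ncard_univ, Nat.card_fun] using ncard_le_ncard (subset_univ (block n '' X))

theorem card_Lang_ne_zero {X : Set (ℤ → A)} (hX : X.Nonempty) (n : ℕ) :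
    Nat.card (Lang X n) ≠ 0 := by
  rw [card_Lang]
  exact ((hX.image _).ncard_pos).ne'

theorem finite_Lang (X : Set (ℤ → A)) (n : ℕ) : (Lang X n).Finite := by
  rw [Lang_eq_image_block]
  exact (toFinite _).image _

theorem card_fol_image_le (X : Set (ℤ → A)) (n : ℕ) :
    Nat.card (fol X '' Lang X n) ≤ Nat.card (Lang X n) :=
  ncard_image_le (finite_Lang X n)

theorem hFol_nonneg (X : Set (ℤ → A)) : 0 ≤ hFol X :=
  expGrowth_nonneg fun n => (card_fol_image_le X n).trans (card_Lang_le X n)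

theorem hFol_le_hTop (X : Set (ℤ → A)) : hFol X ≤ hTop X :=
  expGrowth_le_of_le_mul_const (k := 1) (fun n => (card_fol_image_le X n).trans_eq (mul_one _).symm)
    (card_Lang_le X)

end Language

section Entropy

variable [Fintype A] [MeasurableSpace A] (μ : Measure (ℤ → A)) [IsProbabilityMeasure μ]

theorem blockEntropy_nonneg (n : ℕ) : 0 ≤ blockEntropy μ n :=
  Finset.sum_nonneg fun _ _ => Real.negMulLog_nonneg measureReal_nonneg measureReal_le_one

variable [MeasurableSingletonClass A]

theorem sum_measureReal_cylSet (n : ℕ) : ∑ w, μ.real (cylSet n w) = 1 := by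
  simp only [cylSet_eq_preimage_block]
  rw [sum_measureReal_preimage_singleton _ fun w _ =>
    measurable_block n (measurableSet_singleton w)]
  simp

variable {μ}

theorem sum_negMulLog_le_log_card {ι : Type*} {W : Finset ι} {p : ι → ℝ}
    (hp : ∀ i ∈ W, 0 ≤ p i) (hsum : ∑ i ∈ W, p i = 1) :
    ∑ i ∈ W, Real.negMulLog (p i) ≤ Real.log W.card := by
  have hW : W.Nonempty := by
    by_contra! h
    simp [h] at hsum
  have hcard : (0 : ℝ) < W.card := mod_cast hW.card_pos
  have jensen := Real.concaveOn_negMulLog.le_map_sum (w := fun _ => (W.card : ℝ)⁻¹)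
    (fun _ _ => by positivity)
    (by rw [Finset.sum_const, nsmul_eq_mul, mul_inv_cancel₀ hcard.ne']) hp
  simp only [smul_eq_mul, ← Finset.mul_sum, hsum, mul_one] at jensen
  refine le_of_mul_le_mul_left (jensen.trans_eq ?_) (inv_pos.2 hcard)
  rw [Real.negMulLog, Real.log_inv, neg_mul_neg]

theorem blockEntropy_le_log_card_Lang {X : Set (ℤ → A)} (hμX : μ Xᶜ = 0) (n : ℕ) :
    blockEntropy μ n ≤ Real.log (Nat.card (Lang X n)) := by
  classical
  set W : Finset (Fin n → A) := (toFinite (block n '' X)).toFinset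
  have cyl_null {w : Fin n → A} (hw : w ∉ W) : μ.real (cylSet n w) = 0 := by
    have hsub : cylSet n w ⊆ Xᶜ := fun x hxw hxX => hw <| by
      rw [cylSet_eq_preimage_block] at hxw
      exact (Finite.mem_toFinset _).2 ⟨x, hxX, hxw⟩
    rw [measureReal_def, measure_mono_null hsub hμX, ENNReal.toReal_zero]
  have sum_W : ∑ w ∈ W, μ.real (cylSet n w) = 1 := by
    rw [← sum_measureReal_cylSet μ n]
    exact Finset.sum_subset W.subset_univ fun w _ => cyl_null
  calc blockEntropy μ n = ∑ w ∈ W, Real.negMulLog (μ.real (cylSet n w)) :=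
        (Finset.sum_subset W.subset_univ fun w _ hw => by
          rw [← measureReal_def, cyl_null hw, Real.negMulLog_zero]).symm
    _ ≤ Real.log W.card := sum_negMulLog_le_log_card (fun _ _ => measureReal_nonneg) sum_W
    _ = Real.log (Nat.card (Lang X n)) := by rw [card_Lang, ncard_eq_toFinset_card _ (toFinite _)]

theorem KSEntropy_le_hTop {X : Set (ℤ → A)} (hμX : μ Xᶜ = 0) : KSEntropy μ ≤ hTop X := by
  have hbdd : BddBelow (range fun n : ℕ => blockEntropy μ (n + 1) / ((n : ℝ) + 1)) :=
    ⟨0, forall_mem_range.2 fun n => div_nonneg (blockEntropy_nonneg μ _) (by positivity)⟩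
  refine le_limsup_of_frequently_le (Eventually.frequently ?_)
    (isBoundedUnder_log_div (card_Lang_le X))
  filter_upwards [eventually_ne_atTop 0] with n hn
  obtain ⟨m, rfl⟩ := Nat.exists_eq_succ_of_ne_zero hn
  refine (ciInf_le hbdd m).trans ?_
  push_cast
  exact div_le_div_of_nonneg_right (blockEntropy_le_log_card_Lang hμX _) (by positivity)

theorem le_blockEntropy {n : ℕ} {h : ℝ} (hμ : ∀ w, μ.real (cylSet n w) ≤ Real.exp (-h)) :
    h ≤ blockEntropy μ n := by
  calc h = ∑ w, μ.real (cylSet n w) * h := by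
        rw [← Finset.sum_mul, sum_measureReal_cylSet, one_mul]
    _ ≤ blockEntropy μ n := Finset.sum_le_sum fun w _ => ?_
  rcases (measureReal_nonneg (μ := μ) (s := cylSet n w)).eq_or_lt with h0 | hpos
  · simp [← measureReal_def, ← h0]
  · rw [Real.negMulLog, neg_mul, ← mul_neg]
    exact mul_le_mul_of_nonneg_left (le_neg_of_le_neg ((Real.log_le_iff_le_exp hpos).2 (hμ w)))
      measureReal_nonneg

theorem le_KSEntropy {h : ℝ} (hμ : ∀ n w, μ.real (cylSet n w) ≤ Real.exp (-(n * h))) :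
    h ≤ KSEntropy μ := by
  refine le_ciInf fun n => (le_div_iff₀ (by positivity)).2 ?_
  rw [mul_comm]
  exact_mod_cast le_blockEntropy (hμ (n + 1))

end Entropy

section Shift

variable [TopologicalSpace A]

/-- The shift of `A^ℤ` as a homeomorphism. -/
def shiftHomeomorph : (ℤ → A) ≃ₜ (ℤ → A) where
  toFun := shift
  invFun x n := x (n - 1)
  left_inv x := funext fun n => congrArg x (sub_add_cancel n 1)
  right_inv x := funext fun n => congrArg x (add_sub_cancel_right n 1)
  continuous_toFun := continuous_pi fun _ => continuous_apply _
  continuous_invFun := continuous_pi fun _ => continuous_apply _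

theorem isSubshift_iff_preimage {X : Set (ℤ → A)} :
    IsSubshift X ↔ IsClosed X ∧ shift ⁻¹' X = X := by
  have := shiftHomeomorph.toEquiv.eq_preimage_iff_image_eq X X
  exact and_congr_right fun _ => this.symm.trans eq_comm

theorem isSubshift_closure {Z : Set (ℤ → A)} (hZ : shift ⁻¹' Z = Z) : IsSubshift (closure Z) := by
  refine isSubshift_iff_preimage.2 ⟨isClosed_closure, ?_⟩
  have : shift ⁻¹' closure Z = closure (shift ⁻¹' Z) := shiftHomeomorph.preimage_closure Z
  rw [this, hZ]

end Shift

section ProdFull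

variable {S F : Type*}

/-- The product of `Y ⊆ S^ℤ` with the full shift `F^ℤ`, as a set of sequences over `S × F`. -/
def prodFull (Y : Set (ℤ → S)) (F : Type*) : Set (ℤ → S × F) := {z | Prod.fst ∘ z ∈ Y}

theorem isSubshift_prodFull [TopologicalSpace S] [TopologicalSpace F] {Y : Set (ℤ → S)}
    (hY : IsSubshift Y) : IsSubshift (prodFull Y F) := by
  rw [isSubshift_iff_preimage] at hY ⊢
  refine ⟨hY.1.preimage (by fun_prop), ?_⟩
  calc shift ⁻¹' prodFull Y F = prodFull (shift ⁻¹' Y) F := rfl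
    _ = prodFull Y F := by rw [hY.2]

theorem block_surjective [Nonempty A] (n : ℕ) :
    Function.Surjective (block n : (ℤ → A) → Fin n → A) :=
  Function.Injective.surjective_comp_right (f := fun i : Fin n => (i : ℤ)) fun _ _ h =>
    Fin.ext (Int.ofNat_inj.1 h)

theorem image_block_prodFull [Nonempty F] (Y : Set (ℤ → S)) (n : ℕ) :
    block n '' prodFull Y F =
      (Equiv.arrowProdEquivProdArrow (Fin n) _ _).symm '' ((block n '' Y) ×ˢ univ) := by
  rw [Equiv.image_symm_eq_preimage]
  ext u
  constructor
  · rintro ⟨z, hz, rfl⟩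
    exact ⟨⟨_, hz, rfl⟩, trivial⟩
  · rintro ⟨⟨y, hy, hyu⟩, -⟩
    obtain ⟨x, hx⟩ := block_surjective n (Prod.snd ∘ u)
    exact ⟨fun k => (y k, x k), hy, funext fun i => Prod.ext (congrFun hyu i) (congrFun hx i)⟩

theorem card_Lang_prodFull [Fintype F] [Nonempty F] (Y : Set (ℤ → S)) (n : ℕ) :
    Nat.card (Lang (prodFull Y F) n) = Nat.card (Lang Y n) * Fintype.card F ^ n := by
  rw [card_Lang, card_Lang, image_block_prodFull,
    ncard_image_of_injective _ (Equiv.injective _), ncard_prod, ncard_univ, Nat.card_fun,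
    Nat.card_eq_fintype_card, Nat.card_fin]

theorem hTop_prodFull [Finite S] [Fintype F] [Nonempty F] {Y : Set (ℤ → S)} (hY : Y.Nonempty) :
    hTop (prodFull Y F) = hTop Y + Real.log (Fintype.card F) := by
  have := expGrowth_mul_pow (card_Lang_le Y) (card_Lang_ne_zero hY) (Fintype.card_ne_zero (α := F))
  simp only [← card_Lang_prodFull] at this
  exact this

theorem map_fst_mem_Lang {Y : Set (ℤ → S)} {n : ℕ} {w : List (S × F)}
    (hw : w ∈ Lang (prodFull Y F) n) : w.map Prod.fst ∈ Lang Y n := by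
  obtain ⟨hlen, z, hz, hocc⟩ := hw
  refine ⟨by rw [List.length_map, hlen], _, hz, fun i => ?_⟩
  simpa using congrArg Prod.fst (hocc ⟨i, by simpa using i.2⟩)

theorem fol_prodFull (Y : Set (ℤ → S)) (w : List (S × F)) :
    fol (prodFull Y F) w =
      {y | Prod.fst ∘ y ∈ fol Y (w.map Prod.fst) ∧ ∀ a ∈ w.getLast?, (y 0).2 = a.2} := by
  simp only [fol, Fin.forall_iff, List.length_map, List.get_eq_getElem, List.getElem_map,
    List.getLast?_eq_getElem?, Option.mem_def, List.getElem?_eq_some_iff]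
  ext y
  constructor
  · rintro ⟨z, hz, hzw, hyz⟩
    refine ⟨⟨_, hz, fun i hi => congrArg Prod.fst (hzw i hi),
      fun k => congrArg Prod.fst (hyz k)⟩, ?_⟩
    rintro a ⟨hlast, rfl⟩
    rw [hyz 0, ← hzw _ hlast]
    congr 2
    omega
  · rintro ⟨⟨B, hB, hBw, hyB⟩, hlast⟩
    let x : ℤ → F := fun m =>
      if h : 0 ≤ m ∧ m.toNat < w.length then (w[m.toNat]'h.2).2 else (y (m - w.length + 1).toNat).2
    refine ⟨fun m => (B m, x m), hB, fun i hi => ?_, fun k => ?_⟩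
    · exact Prod.ext (hBw i hi) (by simp [x, hi])
    · refine Prod.ext (hyB k) ?_
      by_cases h : 0 ≤ (w.length : ℤ) - 1 + k ∧ ((w.length : ℤ) - 1 + k).toNat < w.length
      · obtain rfl : k = 0 := by omega
        simp only [x, dif_pos h]
        rw [hlast _ ⟨by omega, rfl⟩]
        congr 2
        omega
      · simp only [x, dif_neg h]
        congr
        omega

theorem hFol_prodFull_le [Finite S] [Finite F] (Y : Set (ℤ → S)) :
    hFol (prodFull Y F) ≤ hFol Y := by
  refine expGrowth_le_of_le_mul_const (k := Nat.card (Option (S × F))) (fun n => ?_)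
    fun n => (card_fol_image_le Y n).trans (card_Lang_le Y n)
  let G : Set (ℕ → S) × Option (S × F) → Set (ℕ → S × F) := fun p =>
    {y | Prod.fst ∘ y ∈ p.1 ∧ ∀ a ∈ p.2, (y 0).2 = a.2}
  have hfin : ((fol Y '' Lang Y n) ×ˢ (univ : Set (Option (S × F)))).Finite :=
    ((finite_Lang Y n).image _).prod finite_univ
  have hsub : fol (prodFull Y F) '' Lang (prodFull Y F) n ⊆ G '' ((fol Y '' Lang Y n) ×ˢ univ) := by
    rintro _ ⟨w, hw, rfl⟩
    exact ⟨(fol Y (w.map Prod.fst), w.getLast?),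
      ⟨mem_image_of_mem _ (map_fst_mem_Lang hw), trivial⟩, (fol_prodFull Y w).symm⟩
  calc Nat.card (fol (prodFull Y F) '' Lang (prodFull Y F) n)
    _ ≤ (G '' ((fol Y '' Lang Y n) ×ˢ univ)).ncard := ncard_le_ncard hsub (hfin.image G)
    _ ≤ ((fol Y '' Lang Y n) ×ˢ univ).ncard := ncard_image_le hfin
    _ = Nat.card (fol Y '' Lang Y n) * Nat.card (Option (S × F)) := by
      rw [ncard_prod, ncard_univ, Nat.card_coe_set_eq]

end ProdFull

section ProdBernoulli

open ProbabilityTheory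

theorem bernoulli_cylSet [MeasurableSpace A] [MeasurableSingletonClass A] (ρ : Measure A)
    [IsProbabilityMeasure ρ] (n : ℕ) (w : Fin n → A) :
    bernoulli ρ (cylSet n w) = ∏ i, ρ {w i} := by
  have map_block : (bernoulli ρ).map (block n) = Measure.pi fun _ => ρ :=
    (Measure.map_infinitePi_infinitePi_of_inj (P := fun _ => ρ) (f := fun i : Fin n => (i : ℤ))
      fun _ _ h => Fin.ext (Int.ofNat_inj.1 h)).trans (Measure.infinitePi_eq_pi _)
  rw [cylSet_eq_preimage_block,
    ← Measure.map_apply (measurable_block n) (measurableSet_singleton w),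
    map_block, Measure.pi_singleton]

theorem bernoulli_uniformOn_real_cylSet [Fintype A] [Nonempty A] [MeasurableSpace A]
    [MeasurableSingletonClass A] (n : ℕ) (w : Fin n → A) :
    (bernoulli (uniformOn univ)).real (cylSet n w) =
      Real.exp (-(n * Real.log (Fintype.card A))) := by
  have hcard : (0 : ℝ) < Fintype.card A := mod_cast Fintype.card_pos
  rw [measureReal_def, bernoulli_cylSet, Real.exp_neg, Real.exp_nat_mul, Real.exp_log hcard]
  simp [uniformOn_univ]

variable {S F : Type*} [MeasurableSpace S] [MeasurableSpace F]

/-- The product of `ν` with the Bernoulli measure of law `ρ`, as a measure on sequences of pairs. -/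
noncomputable def prodBernoulli (ν : Measure (ℤ → S)) (ρ : Measure F) : Measure (ℤ → S × F) :=
  (ν.prod (bernoulli ρ)).map (MeasurableEquiv.arrowProdEquivProdArrow S F ℤ).symm

variable (ν : Measure (ℤ → S)) (ρ : Measure F)

theorem measurePreserving_arrowProd_prodBernoulli : MeasurePreserving
    (MeasurableEquiv.arrowProdEquivProdArrow S F ℤ).symm (ν.prod (bernoulli ρ))
    (prodBernoulli ν ρ) :=
  (MeasurableEquiv.measurable _).measurePreserving _

variable [IsProbabilityMeasure ρ]

theorem measurePreserving_fst_prodBernoulli :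
    MeasurePreserving (Prod.fst ∘ ·) (prodBernoulli ν ρ) ν :=
  (measurePreserving_arrowProd_prodBernoulli ν ρ).comp_right_iff.1 measurePreserving_fst

theorem prodBernoulli_left_injective :
    Function.Injective fun ν : Measure (ℤ → S) => prodBernoulli ν ρ := by
  intro ν₁ ν₂ h
  rw [← (measurePreserving_fst_prodBernoulli ν₁ ρ).map_eq, show prodBernoulli ν₁ ρ = _ from h,
    (measurePreserving_fst_prodBernoulli ν₂ ρ).map_eq]

variable [IsProbabilityMeasure ν]

instance : IsProbabilityMeasure (prodBernoulli ν ρ) :=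
  Measure.isProbabilityMeasure_map (MeasurableEquiv.measurable _).aemeasurable

theorem measurePreserving_snd_prodBernoulli :
    MeasurePreserving (Prod.snd ∘ ·) (prodBernoulli ν ρ) (bernoulli ρ) :=
  (measurePreserving_arrowProd_prodBernoulli ν ρ).comp_right_iff.1 measurePreserving_snd

variable {ν}

theorem ergodic_shift_prodBernoulli (hν : Ergodic shift ν) : Ergodic shift (prodBernoulli ν ρ) :=
  (measurePreserving_arrowProd_prodBernoulli ν ρ).ergodic_of_ergodic_semiconj
    (ergodic_prodMap_of_isMixing hν (isMixing_shift_bernoulli ρ)) measurable_shift fun _ => rfl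

theorem le_KSEntropy_prodBernoulli_uniformOn [Fintype S] [MeasurableSingletonClass S] [Fintype F]
    [Nonempty F] [MeasurableSingletonClass F] (ν : Measure (ℤ → S)) [IsProbabilityMeasure ν] :
    Real.log (Fintype.card F) ≤ KSEntropy (prodBernoulli ν (uniformOn (univ : Set F))) := by
  refine le_KSEntropy fun n w => ?_
  have snd_mp := measurePreserving_snd_prodBernoulli ν (uniformOn (univ : Set F))
  rw [← bernoulli_uniformOn_real_cylSet n (Prod.snd ∘ w), ← snd_mp.measureReal_preimage
    (measurableSet_cylSet n _).nullMeasurableSet]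
  exact measureReal_mono fun x hx i => congrArg Prod.snd (hx i)

theorem isMaxMeasure_prodBernoulli [Fintype S] [MeasurableSingletonClass S] [Fintype F]
    [Nonempty F] [MeasurableSingletonClass F] {Y : Set (ℤ → S)} (hY : hTop Y = 0)
    (hνY : ν Yᶜ = 0) (hν : Ergodic shift ν) :
    IsMaxMeasure (prodFull Y F) (prodBernoulli ν (uniformOn univ)) := by
  have hnull : prodBernoulli ν (uniformOn univ) (prodFull Y F)ᶜ = 0 :=
    (measurePreserving_fst_prodBernoulli ν _).quasiMeasurePreserving.preimage_null hνY
  have hYne : Y.Nonempty := by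
    rw [nonempty_iff_ne_empty]
    rintro rfl
    simp at hνY
  refine ⟨inferInstance, hnull, ergodic_shift_prodBernoulli _ hν, le_antisymm ?_ ?_⟩
  · exact KSEntropy_le_hTop hnull
  · rw [hTop_prodFull hYne, hY, zero_add]
    exact le_KSEntropy_prodBernoulli_uniformOn ν

end ProdBernoulli

section Mechanical

/-- The mechanical word of slope `α` and intercept `β`, with `true` marking the jumps of
`i ↦ ⌊i * α + β⌋`; for irrational `α` in `(0, 1)` it is a Sturmian sequence. -/
noncomputable def mechanical (α β : ℝ) : ℤ → Bool :=
  fun i => decide (⌊i * α + β⌋ < ⌊(i + 1) * α + β⌋)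

theorem shift_mechanical (α β : ℝ) : shift (mechanical α β) = mechanical α (α + β) := by
  funext i
  have h (t : ℝ) : (t + 1) * α + β = t * α + (α + β) := by ring
  simp only [shift, mechanical, Int.cast_add, Int.cast_one, h]

theorem periodic_mechanical (α : ℝ) : Function.Periodic (mechanical α) 1 := by
  intro β
  funext i
  simp only [mechanical, ← add_assoc, Int.floor_add_one, add_lt_add_iff_right]

/-- The closure of the set of all mechanical words with slope in `[0, 1]`. It contains every
Sturmian subshift, but its language grows only polynomially. -/
def mechanicalShift : Set (ℤ → Bool) :=
  closure (image2 mechanical (Icc 0 1) univ)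

theorem mechanical_mem_mechanicalShift {α : ℝ} (hα : α ∈ Icc 0 1) (β : ℝ) :
    mechanical α β ∈ mechanicalShift :=
  subset_closure (mem_image2_of_mem hα trivial)

theorem isSubshift_mechanicalShift : IsSubshift mechanicalShift := by
  refine isSubshift_closure (Subset.antisymm ?_ ?_)
  · rintro x ⟨α, hα, β, -, hx⟩
    refine ⟨α, hα, β - α, trivial, shiftHomeomorph.injective ?_⟩
    calc shift (mechanical α (β - α)) = mechanical α β := by rw [shift_mechanical, add_sub_cancel]
      _ = shift x := hx
  · rintro _ ⟨α, hα, β, -, rfl⟩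
    exact ⟨α, hα, α + β, trivial, (shift_mechanical α β).symm⟩

theorem eqOn_of_le_or_le_of_sum_eq {ι : Type*} {s : Finset ι} {f g : ι → ℤ}
    (hle : (∀ i ∈ s, f i ≤ g i) ∨ ∀ i ∈ s, g i ≤ f i) (hsum : ∑ i ∈ s, f i = ∑ i ∈ s, g i) :
    EqOn f g s := by
  rcases hle with h | h
  · exact (Finset.sum_eq_sum_iff_of_le h).1 hsum
  · exact fun i hi => ((Finset.sum_eq_sum_iff_of_le h).1 hsum.symm i hi).symm

theorem floor_mul_le_or_le (α α' : ℝ) (s : Finset ℕ) :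
    (∀ k ∈ s, ⌊k * α⌋ ≤ ⌊k * α'⌋) ∨ ∀ k ∈ s, ⌊k * α'⌋ ≤ ⌊k * α⌋ :=
  (le_total α α').imp (fun h _ _ => Int.floor_mono (by gcongr)) fun h _ _ =>
    Int.floor_mono (by gcongr)

-- Opposite strict comparisons at `i` and `j` would put an integer strictly between
-- `|i - j| * α` and `|i - j| * α'`.
theorem floor_mul_add_le_or_le {α α' : ℝ} (β β' : ℝ) {n : ℕ}
    (hα : EqOn (fun k : ℕ => ⌊k * α⌋) (fun k : ℕ => ⌊k * α'⌋) (Finset.range n)) :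
    (∀ k ∈ Finset.range n, ⌊k * α + β⌋ ≤ ⌊k * α' + β'⌋) ∨
      ∀ k ∈ Finset.range n, ⌊k * α' + β'⌋ ≤ ⌊k * α + β⌋ := by
  have no_int_between {q : ℕ} {m : ℤ} (hq : q < n) : ¬ (q * α < m ∧ m < q * α') ∧
      ¬ (q * α' < m ∧ m < q * α) := by
    have hqα : ⌊q * α⌋ = ⌊q * α'⌋ := hα (Finset.mem_coe.2 (Finset.mem_range.2 hq))
    constructor
    · rintro ⟨h₁, h₂⟩
      exact absurd (Int.le_floor.2 h₂.le) (hqα ▸ Int.floor_lt.2 h₁).not_ge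
    · rintro ⟨h₁, h₂⟩
      exact absurd (Int.le_floor.2 h₂.le) (hqα ▸ Int.floor_lt.2 h₁).not_ge
  by_contra! ⟨⟨i, hi, hlt_i⟩, ⟨j, hj, hlt_j⟩⟩
  have hiα : (⌊i * α + β⌋ : ℝ) ≤ i * α + β := Int.floor_le _
  have hiα' : i * α' + β' < ⌊i * α + β⌋ := Int.floor_lt.1 hlt_i
  have hjα' : (⌊j * α' + β'⌋ : ℝ) ≤ j * α' + β' := Int.floor_le _
  have hjα : j * α + β < ⌊j * α' + β'⌋ := Int.floor_lt.1 hlt_j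
  rcases le_total i j with hij | hij
  · refine (no_int_between (q := j - i) (m := ⌊j * α' + β'⌋ - ⌊i * α + β⌋)
      ((Nat.sub_le _ _).trans_lt (Finset.mem_range.1 hj))).1 ?_
    push_cast [hij]
    constructor <;> linarith
  · refine (no_int_between (q := i - j) (m := ⌊i * α + β⌋ - ⌊j * α' + β'⌋)
      ((Nat.sub_le _ _).trans_lt (Finset.mem_range.1 hi))).2 ?_
    push_cast [hij]
    constructor <;> linarith

/-- A finite invariant determining the word of length `n` of `mechanical α β`: the vectors of
integer parts occurring here are totally ordered, so that their sums determine them. -/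
noncomputable def floorSums (n : ℕ) (p : ℝ × ℝ) : ℤ × ℤ :=
  (∑ k ∈ Finset.range (n + 1), ⌊k * p.1⌋, ∑ k ∈ Finset.range (n + 1), ⌊k * p.1 + p.2⌋)

theorem block_mechanical_eq_of_floorSums_eq {n : ℕ} {p p' : ℝ × ℝ}
    (h : floorSums n p = floorSums n p') :
    block n (mechanical p.1 p.2) = block n (mechanical p'.1 p'.2) := by
  obtain ⟨hfst, hsnd⟩ := Prod.ext_iff.1 h
  have slope_eq := eqOn_of_le_or_le_of_sum_eq (s := Finset.range (n + 1))
    (floor_mul_le_or_le p.1 p'.1 _) hfst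
  have floor_eq := eqOn_of_le_or_le_of_sum_eq (floor_mul_add_le_or_le p.2 p'.2 slope_eq) hsnd
  funext i
  have hi := floor_eq (Finset.mem_coe.2 (Finset.mem_range.2 (show (i : ℕ) < n + 1 by omega)))
  have hi' := floor_eq (Finset.mem_coe.2 (Finset.mem_range.2 (show (i : ℕ) + 1 < n + 1 by omega)))
  push_cast at hi hi'
  simp only [block, mechanical, Int.cast_natCast, hi, hi']

theorem sum_floor_mem_Ico {α β : ℝ} (hα : α ∈ Icc 0 1) (hβ : β ∈ Ico 0 1) (n : ℕ) :
    ∑ k ∈ Finset.range (n + 1), ⌊k * α + β⌋ ∈ Ico (0 : ℤ) ((n + 1) ^ 2 : ℕ) := by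
  have floor_le {k : ℕ} (hk : k ∈ Finset.range (n + 1)) : ⌊k * α + β⌋ ≤ n := by
    have hkn : (k : ℝ) ≤ n := mod_cast Finset.mem_range_succ_iff.1 hk
    have hkα : k * α ≤ k := mul_le_of_le_one_right k.cast_nonneg hα.2
    refine Int.lt_add_one_iff.1 (Int.floor_lt.2 ?_)
    push_cast
    linarith [hβ.2]
  constructor
  · exact Finset.sum_nonneg fun k _ =>
      Int.floor_nonneg.2 (add_nonneg (mul_nonneg k.cast_nonneg hα.1) hβ.1)
  · have := Finset.sum_le_sum fun k hk => floor_le (k := k) hk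
    simp only [Finset.sum_const, Finset.card_range, nsmul_eq_mul] at this
    push_cast at this ⊢
    nlinarith

theorem ncard_image_le_of_factorsThrough {ι κ τ : Type*} {P : Set ι} {T : Set τ} {f : ι → κ}
    {g : ι → τ} (hT : T.Finite) (hg : MapsTo g P T) (hfg : ∀ p q, g p = g q → f p = f q) :
    (f '' P).ncard ≤ T.ncard := by
  rcases P.eq_empty_or_nonempty with rfl | ⟨p₀, -⟩
  · simp
  refine (ncard_le_ncard ?_ (hT.image (Function.extend g f fun _ => f p₀))).trans
    (ncard_image_le hT)
  rintro _ ⟨p, hp, rfl⟩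
  exact ⟨g p, hg hp, Function.FactorsThrough.extend_apply (fun p q => hfg p q) _ _⟩

theorem image_block_mechanicalShift (n : ℕ) :
    block n '' mechanicalShift =
      (fun p : ℝ × ℝ => block n (mechanical p.1 p.2)) '' (Icc 0 1 ×ˢ Ico 0 1) := by
  rw [mechanicalShift, image_block_closure]
  ext w
  constructor
  · rintro ⟨_, ⟨α, hα, β, -, rfl⟩, rfl⟩
    refine ⟨(α, Int.fract β), ⟨hα, Int.fract_nonneg β, Int.fract_lt_one β⟩, ?_⟩
    exact congrArg (block n) (by simpa using (periodic_mechanical α).sub_int_mul_eq (x := β) ⌊β⌋)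
  · rintro ⟨⟨α, β⟩, hp, rfl⟩
    exact ⟨_, ⟨α, hp.1, β, trivial, rfl⟩, rfl⟩

theorem card_Lang_mechanicalShift_le (n : ℕ) : Nat.card (Lang mechanicalShift n) ≤ (n + 1) ^ 4 := by
  set T : Set ℤ := Ico 0 ((n + 1) ^ 2 : ℕ)
  have hT : T.ncard = (n + 1) ^ 2 := by
    rw [ncard_eq_toFinset_card', toFinset_Ico, Int.card_Ico, sub_zero, Int.toNat_natCast]
  have hmaps : MapsTo (floorSums n) (Icc 0 1 ×ˢ Ico 0 1) (T ×ˢ T) := fun p hp =>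
    ⟨by simpa [floorSums, T] using sum_floor_mem_Ico hp.1 (left_mem_Ico.2 one_pos) n,
      sum_floor_mem_Ico hp.1 hp.2 n⟩
  calc Nat.card (Lang mechanicalShift n)
    _ ≤ (T ×ˢ T).ncard := by
      rw [card_Lang, image_block_mechanicalShift]
      exact ncard_image_le_of_factorsThrough ((finite_Ico _ _).prod (finite_Ico _ _)) hmaps
        fun _ _ => block_mechanical_eq_of_floorSums_eq
    _ = (n + 1) ^ 4 := by rw [ncard_prod, hT, ← pow_add]

theorem hTop_mechanicalShift : hTop mechanicalShift = 0 :=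
  expGrowth_eq_zero card_Lang_mechanicalShift_le

end Mechanical

section SturmianMeasure

theorem ergodic_irrational_rotation {α : ℝ} (hα : Irrational α) :
    Ergodic ((α : UnitAddCircle) + ·) volume := by
  rw [AddCircle.ergodic_add_left, addOrderOf_eq_zero_iff']
  intro n hn hnα
  rw [← AddCircle.coe_nsmul, AddCircle.coe_eq_zero_iff] at hnα
  obtain ⟨m, hm⟩ := hnα
  exact (hα.natCast_mul hn.ne').ne_int m (by simpa using hm.symm)

theorem measurable_mechanical (α : ℝ) : Measurable (mechanical α) :=
  measurable_pi_lambda _ fun i => measurable_to_bool <| by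
    have : MeasurableSet {β : ℝ | ⌊i * α + β⌋ < ⌊(i + 1) * α + β⌋} :=
      measurableSet_lt (by fun_prop) (by fun_prop)
    simpa [mechanical, preimage] using this

theorem measurable_lift_mechanical (α : ℝ) : Measurable (periodic_mechanical α).lift :=
  QuotientAddGroup.measurable_from_quotient.2 (measurable_mechanical α)

/-- The law of the mechanical word of slope `α` whose intercept is uniformly distributed modulo `1`.
For irrational `α` it is the unique invariant measure of the Sturmian subshift of slope `α`. -/
noncomputable def mechanicalMeasure (α : ℝ) : Measure (ℤ → Bool) :=
  (volume : Measure UnitAddCircle).map (periodic_mechanical α).lift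

instance (α : ℝ) : IsProbabilityMeasure (mechanicalMeasure α) :=
  have : IsProbabilityMeasure (volume : Measure UnitAddCircle) := ⟨UnitAddCircle.measure_univ⟩
  Measure.isProbabilityMeasure_map (measurable_lift_mechanical α).aemeasurable

theorem mechanicalMeasure_eq_map (α : ℝ) :
    mechanicalMeasure α = (volume.restrict (Ioc 0 1)).map (mechanical α) := by
  have hmk := UnitAddCircle.measurePreserving_mk 0
  rw [zero_add] at hmk
  rw [mechanicalMeasure, ← hmk.map_eq,
    Measure.map_map (measurable_lift_mechanical α) hmk.measurable]
  rfl

theorem ergodic_shift_mechanicalMeasure {α : ℝ} (hα : Irrational α) :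
    Ergodic shift (mechanicalMeasure α) := by
  refine ((measurable_lift_mechanical α).measurePreserving volume).ergodic_of_ergodic_semiconj
    (ergodic_irrational_rotation hα) measurable_shift fun θ => ?_
  induction θ using QuotientAddGroup.induction_on with
  | H β => exact (shift_mechanical α β).symm

theorem mechanicalMeasure_compl_mechanicalShift {α : ℝ} (hα : α ∈ Icc 0 1) :
    mechanicalMeasure α mechanicalShiftᶜ = 0 := by
  have hpre : mechanical α ⁻¹' mechanicalShiftᶜ = ∅ :=
    eq_empty_of_forall_notMem fun β hβ => hβ (mechanical_mem_mechanicalShift hα β)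
  rw [mechanicalMeasure_eq_map, Measure.map_apply (measurable_mechanical α)
    isSubshift_mechanicalShift.1.measurableSet.compl, hpre, measure_empty]

theorem mechanicalMeasure_apply_zero {α : ℝ} (hα : α ∈ Icc 0 1) :
    mechanicalMeasure α {x | x 0 = true} = ENNReal.ofReal α := by
  have hpre : mechanical α ⁻¹' {x | x 0 = true} ∩ Ico 0 1 = Ico (1 - α) 1 := by
    ext β
    have jump_iff (hβ : β ∈ Ico 0 1) : mechanical α β 0 = true ↔ 1 - α ≤ β := by
      simp [mechanical, Int.floor_eq_zero_iff.2 hβ, Int.floor_pos, add_comm α β]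
    exact ⟨fun ⟨hjump, hβ⟩ => ⟨(jump_iff hβ).1 hjump, hβ.2⟩, fun hβ =>
      have hβ' : β ∈ Ico 0 1 := ⟨(sub_nonneg.2 hα.2).trans hβ.1, hβ.2⟩
      ⟨(jump_iff hβ').2 hβ.1, hβ'⟩⟩
  have hmeas : MeasurableSet {x : ℤ → Bool | x 0 = true} :=
    measurableSet_eq_fun (measurable_pi_apply 0) measurable_const
  rw [mechanicalMeasure_eq_map, Measure.map_apply (measurable_mechanical α) hmeas,
    ← restrict_Ico_eq_restrict_Ioc, Measure.restrict_apply (measurable_mechanical α hmeas), hpre,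
    Real.volume_Ico, sub_sub_cancel]

theorem mechanicalMeasure_injOn : InjOn mechanicalMeasure (Icc 0 1) := by
  intro α hα α' hα' h
  rw [← ENNReal.ofReal_eq_ofReal_iff hα.1 hα'.1, ← mechanicalMeasure_apply_zero hα, h,
    mechanicalMeasure_apply_zero hα']

theorem not_countable_irrational_Icc : ¬ (Icc (0 : ℝ) 1 ∩ {α | Irrational α}).Countable := by
  intro h
  have hIcc : (Icc (0 : ℝ) 1).Countable :=
    (h.union (countable_range ((↑) : ℚ → ℝ))).mono fun α hα =>
      (em (Irrational α)).imp (⟨hα, ·⟩) not_not.1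
  simpa using hIcc.measure_zero volume

theorem not_countable_isMaxMeasure :
    ¬ {μ | IsMaxMeasure (prodFull mechanicalShift Bool) μ}.Countable := by
  intro h
  let μ (α : ℝ) :=
    prodBernoulli (mechanicalMeasure α) (ProbabilityTheory.uniformOn (univ : Set Bool))
  have μ_inj : InjOn μ (Icc 0 1 ∩ {α | Irrational α}) :=
    (prodBernoulli_left_injective _).comp_injOn (mechanicalMeasure_injOn.mono inter_subset_left)
  have μ_max : MapsTo μ (Icc 0 1 ∩ {α | Irrational α})
      {μ | IsMaxMeasure (prodFull mechanicalShift Bool) μ} := fun α hα =>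
    isMaxMeasure_prodBernoulli hTop_mechanicalShift
      (mechanicalMeasure_compl_mechanicalShift hα.1) (ergodic_shift_mechanicalMeasure hα.2)
  exact not_countable_irrational_Icc (μ_max.countable_of_injOn μ_inj h)

end SturmianMeasure

/-- There exists a subshift with follower entropy `0` and
positive topological entropy which has uncountably many maximum measures. -/
theorem hFol_zero_uncountably_many_max_measures :
    ∃ (A : Type) (fA : Fintype A) (X : Set (ℤ → A)),
      (letI : TopologicalSpace A := ⊥
       IsSubshift X) ∧
      hFol X = 0 ∧ 0 < hTop X ∧
      (letI : Fintype A := fA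
       letI : MeasurableSpace A := ⊤
       ¬ {μ : Measure (ℤ → A) | IsMaxMeasure X μ}.Countable) := by
  have top_eq_bot : (inferInstance : TopologicalSpace (Bool × Bool)) = ⊥ := DiscreteTopology.eq_bot
  have meas_eq_top : (inferInstance : MeasurableSpace (Bool × Bool)) = ⊤ :=
    eq_top_iff.2 fun _ _ => MeasurableSet.of_discrete
  refine ⟨Bool × Bool, inferInstance, prodFull mechanicalShift Bool, ?_, ?_, ?_, ?_⟩
  · rw [← top_eq_bot]
    exact isSubshift_prodFull isSubshift_mechanicalShift
  · refine le_antisymm ?_ (hFol_nonneg _)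
    calc hFol (prodFull mechanicalShift Bool) ≤ hFol mechanicalShift := hFol_prodFull_le _
      _ ≤ hTop mechanicalShift := hFol_le_hTop _
      _ = 0 := hTop_mechanicalShift
  · rw [hTop_prodFull ⟨_, mechanical_mem_mechanicalShift unitInterval.zero_mem 0⟩,
      hTop_mechanicalShift, zero_add]
    exact Real.log_pos (by simp)
  · rw [← meas_eq_top]
    exact not_countable_isMaxMeasure

end QFTPaper
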